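/- arXiv:1001.4824 — 5 statements merged into one kernel-verified Lean document; each statement's English description precedes it below -/
import Mathlib

section
/- Let g be a finite-dimensional simple Lie algebra over an algebraically closed field F of characteristic zero, let A be a commutative associative unital F-algebra, and let (·|·) be a symmetric, invariant, nondegenerate F-bilinear form on the Lie algebra g⊗A. Then there exists an F-linear functional t : A → F such that (x⊗a | y⊗b) = K(x,y)·t(ab) for all x, y ∈ g and a, b ∈ A, where K is the Killing form of g. -/
/-!
Fixing `a` and `b`, the form `(x, y) ↦ B (a ⊗ x) (b ⊗ y)` on `g` is invariant, so by Schur's lemma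
it is a multiple `c a b` of the Killing form (`exists_smul_killingForm_of_invariant`). Moving the
factor `a` across the bracket, `a ⊗ [x, z] = [1 ⊗ x, a ⊗ z]`, gives
`c a b * K([x, z], y) = c 1 (a * b) * K(x, [z, y])`; as `K([x, z], y)` is not identically zero,
`c a b` depends only on `a * b`, linearly.
-/

open scoped TensorProduct

/-- The Killing form spans the invariant bilinear forms on a simple Lie algebra. Through the
nondegenerate Killing form an invariant form becomes an endomorphism commuting with the adjoint
action; an eigenspace of it is a nonzero ideal, hence everything. -/
theorem exists_smul_killingForm_of_invariant
    (F : Type*) [Field F] [IsAlgClosed F] [CharZero F]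
    (g : Type*) [LieRing g] [LieAlgebra F g]
    [FiniteDimensional F g] [LieAlgebra.IsSimple F g]
    (β : g →ₗ[F] g →ₗ[F] F) (hβ : ∀ x y z : g, β ⁅x, y⁆ z = β x ⁅y, z⁆) :
    ∃ c : F, ∀ x y : g, β x y = killingForm F g x y * c := by
  have hK : (killingForm F g).Nondegenerate := LieAlgebra.IsKilling.killingForm_nondegenerate F g
  let φ : Module.End F g :=
    (LinearMap.BilinForm.toDual (killingForm F g) hK).symm.toLinearMap ∘ₗ β
  have hφ (x y : g) : killingForm F g (φ x) y = β x y :=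
    LinearMap.BilinForm.apply_toDual_symm_apply (hB := hK) (β x) y
  have hφ_lie (x y : g) : φ ⁅y, x⁆ = ⁅y, φ x⁆ := by
    rw [← sub_eq_zero]
    refine hK.1 _ fun z ↦ ?_
    rw [map_sub, LinearMap.sub_apply, hφ, ← lie_skew y x, ← lie_skew y (φ x), map_neg, map_neg,
      LinearMap.neg_apply, LinearMap.neg_apply, hβ, LieModule.traceForm_apply_lie_apply, hφ,
      sub_self]
  have : Nontrivial g := LieAlgebra.IsSimple.nontrivial F g
  obtain ⟨c, hc⟩ := Module.End.exists_eigenvalue φ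
  let I : LieIdeal F g :=
    { Module.End.eigenspace φ c with
      lie_mem := by
        intro y x hx
        have hx : φ x = c • x := Module.End.mem_eigenspace_iff.mp hx
        refine Module.End.mem_eigenspace_iff.mpr ?_
        rw [hφ_lie, hx, lie_smul] }
  have hI : I = ⊤ := by
    refine (LieAlgebra.IsSimple.eq_bot_or_eq_top I).resolve_left fun h ↦ ?_
    obtain ⟨v, hv⟩ := hc.exists_hasEigenvector
    have hvI : v ∈ I := hv.1
    rw [h] at hvI
    exact hv.2 hvI
  refine ⟨c, fun x y ↦ ?_⟩
  have hx : x ∈ I := hI ▸ LieSubmodule.mem_top x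
  have hx : φ x = c • x := Module.End.mem_eigenspace_iff.mp hx
  rw [← hφ, hx, map_smul, LinearMap.smul_apply, smul_eq_mul, mul_comm]

/-- If `K([x, z], y)` always vanished then, `K` being nondegenerate, `g` would be abelian. -/
theorem exists_killingForm_lie_ne_zero
    (F : Type*) [Field F] [CharZero F]
    (g : Type*) [LieRing g] [LieAlgebra F g]
    [FiniteDimensional F g] [LieAlgebra.IsSimple F g] :
    ∃ x z y : g, killingForm F g ⁅x, z⁆ y ≠ 0 := by
  by_contra! h
  exact LieAlgebra.IsSimple.non_abelian F (L := g) ⟨fun x z ↦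
    (LieAlgebra.IsKilling.killingForm_nondegenerate F g).1 _ (h x z)⟩

theorem lie_bilinear_form_eq_killing_mul_trace
    (F : Type*) [Field F] [IsAlgClosed F] [CharZero F]
    (g : Type*) [LieRing g] [LieAlgebra F g]
    [FiniteDimensional F g] [LieAlgebra.IsSimple F g]
    (A : Type*) [CommRing A] [Algebra F A]
    (B : (A ⊗[F] g) →ₗ[F] (A ⊗[F] g) →ₗ[F] F)
    (hsymm : ∀ u v : A ⊗[F] g, B u v = B v u)
    (hinv : ∀ u v w : A ⊗[F] g, B ⁅u, v⁆ w = B u ⁅v, w⁆)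
    (hnondeg : ∀ u : A ⊗[F] g, (∀ v : A ⊗[F] g, B u v = 0) → u = 0) :
    ∃ t : A →ₗ[F] F, ∀ (x y : g) (a b : A),
      B (a ⊗ₜ[F] x) (b ⊗ₜ[F] y) = killingForm F g x y * t (a * b) := by
  have hprop (a b : A) :
      ∃ c : F, ∀ x y : g, B (a ⊗ₜ[F] x) (b ⊗ₜ[F] y) = killingForm F g x y * c := by
    refine exists_smul_killingForm_of_invariant F g
      (B.compl₁₂ (TensorProduct.mk F A g a) (TensorProduct.mk F A g b)) fun x y z ↦ ?_
    have h := hinv (a ⊗ₜ[F] x) (1 ⊗ₜ[F] y) (b ⊗ₜ[F] z)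
    simpa [LieAlgebra.ExtendScalars.bracket_tmul] using h
  choose c hc using hprop
  obtain ⟨x₀, z₀, y₀, h₀⟩ := exists_killingForm_lie_ne_zero F g
  have hc_mul (a b : A) : c a b = c 1 (a * b) := by
    have h := hinv (1 ⊗ₜ[F] x₀) (a ⊗ₜ[F] z₀) (b ⊗ₜ[F] y₀)
    rw [LieAlgebra.ExtendScalars.bracket_tmul, LieAlgebra.ExtendScalars.bracket_tmul, one_mul,
      hc, hc, ← LieModule.traceForm_apply_lie_apply] at h
    exact mul_left_cancel₀ h₀ h
  -- The functional `c 1`, written so that its linearity is inherited from that of `B`.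
  let t : A →ₗ[F] F := (killingForm F g ⁅x₀, z₀⁆ y₀)⁻¹ •
    (B (1 ⊗ₜ[F] ⁅x₀, z₀⁆) ∘ₗ (TensorProduct.mk F A g).flip y₀)
  have ht (a : A) : t a = c 1 a := by
    simp [t, hc, inv_mul_cancel_left₀ h₀]
  exact ⟨t, fun x y a b ↦ by rw [hc, hc_mul, ht]⟩
end

section
/- Let F be a field, R an associative unital F-algebra, and let V and W be R-modules that are finite-dimensional as F-vector spaces and simple (irreducible) as R-modules. If the annihilator Ann_R(W) = {r ∈ R : r·W = 0} annihilates V, i.e. Ann_R(W) ⊆ Ann_R(V), then V and W are isomorphic as R-modules. -/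
/-!
Let `b` be a finite `F`-basis of `W`. Elements of `R` act `F`-linearly on `W`, so the `R`-linear
map `R → W^b`, `r ↦ (r • bᵢ)ᵢ`, has kernel exactly the annihilator of `W`. For a nonzero `v : V`,
the orbit map `R → V`, `r ↦ r • v`, therefore factors through the image of `R` in `W^b`. Since
`W^b` is semisimple, this factorization extends to a nonzero `R`-linear map `W^b → V`. Its
restriction to some factor is a nonzero map `W → V`, which is an isomorphism by Schur's lemma
(`LinearMap.bijective_of_ne_zero`).
-/

/-- Let `F` be a field, `R` an associative unital `F`-algebra and let `V`, `W`
be `R`-modules that are finite-dimensional as `F`-vector spaces and simple as `R`-modules.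
If the annihilator of `W` annihilates `V`, then `V ≅ W` as `R`-modules. -/
theorem simple_module_iso_of_annihilator_le
    (F : Type*) [Field F] (R : Type*) [Ring R] [Algebra F R]
    (V : Type*) [AddCommGroup V] [Module R V] [Module F V] [IsScalarTower F R V]
    (W : Type*) [AddCommGroup W] [Module R W] [Module F W] [IsScalarTower F R W]
    [FiniteDimensional F V] [FiniteDimensional F W]
    [IsSimpleModule R V] [IsSimpleModule R W]
    (h : ∀ r : R, (∀ w : W, r • w = 0) → ∀ v : V, r • v = 0) :
    Nonempty (V ≃ₗ[R] W) := by
  classical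
  let b := Module.finBasis F W
  let φ : R →ₗ[R] (Fin (Module.finrank F W) → W) :=
    LinearMap.pi fun i => LinearMap.toSpanSingleton R W (b i)
  have hφ : ∀ r : R, φ r = 0 → ∀ w : W, r • w = 0 := by
    intro r hr w
    -- The `F`-action on `W` is that of the central elements `algebraMap F R c`.
    have comm : ∀ (c : F) (x : W), r • c • x = c • r • x := fun c x => by
      rw [← one_smul R x, ← smul_assoc c (1 : R) x, smul_smul, ← smul_assoc c r, one_smul,
        mul_smul_comm, mul_one]
    have hb : ∀ i, r • b i = 0 := fun i => congrFun hr i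
    rw [← b.sum_repr w, Finset.smul_sum]
    exact Finset.sum_eq_zero fun i _ => by rw [comm, hb, smul_zero]
  have : Nontrivial V := IsSimpleModule.nontrivial R V
  obtain ⟨v, hv⟩ := exists_ne (0 : V)
  let ψ : R →ₗ[R] V := LinearMap.toSpanSingleton R V v
  have hker : LinearMap.ker φ ≤ LinearMap.ker ψ := fun r hr => h r (hφ r hr) v
  obtain ⟨g, hg⟩ := IsSemisimpleModule.extension_property
    ((LinearMap.ker φ).liftQ φ le_rfl)
    (LinearMap.ker_eq_bot.mp (Submodule.ker_liftQ_eq_bot _ _ _ le_rfl))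
    ((LinearMap.ker φ).liftQ ψ hker)
  have hg1 : g (φ 1) = v := by
    have := LinearMap.congr_fun hg (Submodule.Quotient.mk 1)
    simpa [ψ] using this
  obtain ⟨i, hi⟩ : ∃ i, g ∘ₗ LinearMap.single R (fun _ => W) i ≠ 0 := by
    by_contra! hz
    have : g = 0 := LinearMap.pi_ext' fun i => by rw [hz i, LinearMap.zero_comp]
    exact hv (by rw [← hg1, this, LinearMap.zero_apply])
  exact ⟨(LinearEquiv.ofBijective _ (LinearMap.bijective_of_ne_zero hi)).symm⟩
end

section
/- Let F be an algebraically closed field of characteristic zero, let (α_k ∈ F : k ≥ 2) be any family, and let t : F((x)) → F be the F-linear functional defined on f = Σ_i f_i x^i by t(f) = f_{−1} + Σ_{k ≥ 2} α_k f_{−k} (a finite sum, since a Laurent series has finitely many nonzero coefficients of negative index); thus t(x^i) = 0 for i ≥ 0, t(x^{−1}) = 1, and t(x^{−k}) = α_k for k ≥ 2. Then there exist coefficients ξ_1, ξ_2, … ∈ F such that the power series y = x + Σ_{i≥1} ξ_i x^{i+1}, which is invertible in F((x)), satisfies t(y^{−k}) = 0 for all k ≥ 2. -/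
/-!
Put `A = 1 + Σ_{k≥2} α_k x^{k-1}`. Then `t(f)` is the residue of `f · A dx`, so the natural choice
is the primitive `y = x + Σ_{k≥2} (α_k / k) x^k` of `A`: for `k ≥ 2` the form
`y^{-k} A dx = y^{-k} dy` is exact, hence has residue zero.

To stay within power series, write `y = x u` with `u` a unit and `v = u⁻¹`. Then
`y^{-k} = x^{-k} v^k`, and exactness becomes `(k-1) v^k y' = (k-1) w - x w'` with `w = v^{k-1}`,
whose coefficient of `x^{k-1}` vanishes (`coeff_pow_mul_derivative`). The lemma `coeff_inv_pow`
translates Laurent coefficients of `y^{-k}` into coefficients of `v^k`.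
-/

open PowerSeries in
/-- The vanishing of the residue of `y^{-(n+2)} dy` for `y = X * u`, with `v = u⁻¹`. -/
lemma coeff_pow_mul_derivative {F : Type*} [Field F] [CharZero F] (u v : PowerSeries F)
    (huv : u * v = 1) (n : ℕ) :
    coeff (n + 1) (v ^ (n + 2) * derivative F (X * u)) = 0 := by
  have hd : u * derivative F v + v * derivative F u = 0 := by
    have h := congrArg (derivative F) huv
    simpa [Derivation.leibniz] using h
  have key : ((n + 1 : ℕ) : PowerSeries F) * (v ^ (n + 2) * derivative F (X * u))
      = ((n + 1 : ℕ) : PowerSeries F) * v ^ (n + 1) - X * derivative F (v ^ (n + 1)) := by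
    have h1 : derivative F (v ^ (n + 1))
        = ((n + 1 : ℕ) : PowerSeries F) * (v ^ n * derivative F v) := by
      simp [Derivation.leibniz_pow]
    have h2 : derivative F (X * u) = X * derivative F u + u := by
      simp [Derivation.leibniz]
    rw [h1, h2]
    linear_combination (((n + 1 : ℕ) : PowerSeries F) * v ^ (n + 1)
      - ((n + 1 : ℕ) : PowerSeries F) * X * v ^ n * derivative F v) * huv
      + ((n + 1 : ℕ) : PowerSeries F) * X * v ^ (n + 1) * hd
  have h := congrArg (coeff (n + 1)) key
  have hc : ∀ p : PowerSeries F, coeff (n + 1) (((n + 1 : ℕ) : PowerSeries F) * p)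
      = ((n + 1 : ℕ) : F) * coeff (n + 1) p := by
    intro p
    rw [← nsmul_eq_mul, map_nsmul, nsmul_eq_mul]
  rw [map_sub, hc, hc, coeff_succ_X_mul, coeff_derivative] at h
  have h0 : ((n + 1 : ℕ) : F) ≠ 0 := Nat.cast_ne_zero.2 n.succ_ne_zero
  refine (mul_eq_zero.1 (h.trans ?_)).resolve_left h0
  push_cast
  ring

open PowerSeries in
lemma coeff_inv_pow {F : Type*} [Field F] (u v : PowerSeries F) (huv : u * v = 1) (k i : ℕ) :
    (((HahnSeries.ofPowerSeries ℤ F (X * u))⁻¹) ^ k).coeff (-(i : ℤ))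
      = if i ≤ k then coeff (k - i) (v ^ k) else 0 := by
  have h : ((HahnSeries.ofPowerSeries ℤ F (X * u))⁻¹) ^ k
      = HahnSeries.single (-(k : ℤ)) 1 * HahnSeries.ofPowerSeries ℤ F (v ^ k) := by
    rw [inv_pow]
    symm
    apply eq_inv_of_mul_eq_one_left
    rw [← map_pow, mul_assoc, ← map_mul]
    have : v ^ k * (X * u) ^ k = X ^ k := by
      rw [← mul_pow, mul_left_comm, mul_comm v, huv, mul_one]
    rw [this, HahnSeries.ofPowerSeries_X_pow, HahnSeries.single_mul_single]
    simp
  have h2 := HahnSeries.coeff_single_mul_add (r := (1 : F))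
    (x := HahnSeries.ofPowerSeries ℤ F (v ^ k)) (a := (k : ℤ) - i) (b := -(k : ℤ))
  rw [h, show (-(i : ℤ)) = (k : ℤ) - i + -(k : ℤ) by ring, h2, one_mul]
  have h3 := PowerSeries.coeff_coe (v ^ k) ((k : ℤ) - i)
  rw [h3]
  by_cases hik : i ≤ k
  · rw [if_pos hik, if_neg (by lia)]
    congr 2
    lia
  · rw [if_neg hik, if_pos (by lia)]

/-- Let `F` be an algebraically closed field of characteristic zero, let
`(α_k : k ≥ 2)` be any family of scalars, and let `t : F((x)) → F` be the functional
`t(f) = f_{−1} + Σ_{k≥2} α_k f_{−k}`.  Then there are coefficients `ξ₁, ξ₂, … ∈ F` such that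
the power series `y = x + Σ_{i≥1} ξᵢ x^{i+1}`, invertible in `F((x))`, satisfies
`t(y^{−k}) = 0` for all `k ≥ 2`. -/
theorem exists_coordinate_change_killing_trace
    (F : Type*) [Field F] [IsAlgClosed F] [CharZero F] (α : ℕ → F) :
    ∃ ξ : ℕ → F,
      ∀ k : ℕ, 2 ≤ k →
        (fun f : LaurentSeries F =>
            f.coeff (-1) + ∑ᶠ i : ℕ, if 2 ≤ i then α i * f.coeff (-(i : ℤ)) else 0)
          (((HahnSeries.ofPowerSeries ℤ F
              (PowerSeries.mk fun m => if m = 1 then 1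
                else if 2 ≤ m then ξ (m - 1) else 0))⁻¹) ^ k) = 0 := by
  -- `y` is the primitive of `1 + Σ α_k x^{k-1}`
  refine ⟨fun m => α (m + 1) / ((m : F) + 1), fun k hk => ?_⟩
  obtain ⟨n, rfl⟩ := Nat.exists_eq_add_of_le' hk
  set u : PowerSeries F := PowerSeries.mk fun m =>
    if m = 0 then 1 else α (m + 1) / ((m : F) + 1) with hu
  have hy : (PowerSeries.mk fun m => if m = 1 then (1 : F)
      else if 2 ≤ m then α (m - 1 + 1) / (((m - 1 : ℕ) : F) + 1) else 0) = PowerSeries.X * u := by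
    ext m
    rcases m with _ | _ | m
    · simp
    · simp [PowerSeries.coeff_succ_X_mul, hu]
    · simp [PowerSeries.coeff_succ_X_mul, hu]
  have huv : u * u⁻¹ = 1 := PowerSeries.mul_inv_cancel _ (by simp [hu])
  set v := u⁻¹
  have hder : ∀ m, PowerSeries.coeff m (PowerSeries.derivative F (PowerSeries.X * u))
      = if m = 0 then 1 else α (m + 1) := by
    intro m
    rw [PowerSeries.coeff_derivative, PowerSeries.coeff_succ_X_mul, hu, PowerSeries.coeff_mk]
    have : (m : F) + 1 ≠ 0 := Nat.cast_add_one_ne_zero m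
    split_ifs with h
    · simp [h]
    · field_simp
  have hres := coeff_pow_mul_derivative u v huv n
  rw [mul_comm, PowerSeries.coeff_mul, Finset.Nat.sum_antidiagonal_eq_sum_range_succ_mk,
    Finset.sum_range_succ'] at hres
  simp only [hder] at hres
  beta_reduce
  rw [hy]
  have h1 := coeff_inv_pow u v huv (n + 2) 1
  rw [Nat.cast_one] at h1
  rw [h1]
  simp only [coeff_inv_pow u v huv]
  rw [finsum_eq_sum_of_support_subset (s := Finset.range (n + 1 + 2)), Finset.sum_range_succ',
    Finset.sum_range_succ']
  · rw [add_comm]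
    convert hres using 2
    · simp only [Nat.reduceLeDiff, if_false, add_zero, zero_add]
      refine Finset.sum_congr rfl fun i hi => ?_
      have := Finset.mem_range.1 hi
      rw [if_pos (by lia), if_pos (by lia), if_neg (by lia)]
      congr 3
      lia
    · simp
  · intro i hi
    by_contra hni
    simp only [Finset.coe_range, Set.mem_Iio, not_lt] at hni
    apply hi
    simp [show ¬ i ≤ n + 2 by lia]
end

section
/- Let g be a nonzero finite-dimensional simple Lie algebra over a field of characteristic zero. Then no derivation f : g → g is bijective; equivalently, every derivation of g has a nonzero kernel. -/
/-! A simple Lie algebra has trivial solvable radical, so in characteristic zero Cartan's criterion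
makes its Killing form nondegenerate, and hence every derivation is inner
(`LieDerivation.IsKilling.exists_eq_ad`). A derivation `ad x` kills `x`, which is a nonzero kernel
element unless `x = 0`, and in that case the derivation is zero. -/

/-- Let `g` be a nonzero finite-dimensional simple Lie algebra over a field
of characteristic zero.  Then no derivation `f : g → g` is bijective; equivalently, every
derivation of `g` has a nonzero kernel. -/
theorem derivation_not_bijective
    (K : Type*) [Field K] [CharZero K]
    (g : Type*) [LieRing g] [LieAlgebra K g] [Nontrivial g]
    [FiniteDimensional K g] [LieAlgebra.IsSimple K g]
    (f : g →ₗ[K] g) (hf : ∀ a b : g, f ⁅a, b⁆ = ⁅f a, b⁆ + ⁅a, f b⁆) :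
    ¬ Function.Bijective f ∧ ∃ a : g, a ≠ 0 ∧ f a = 0 := by
  have key : ∃ a : g, a ≠ 0 ∧ f a = 0 := by
    let D : LieDerivation K g g :=
      { toLinearMap := f
        leibniz' := fun a b => by rw [hf, ← lie_skew b (f a)]; abel }
    obtain ⟨x, hx⟩ := LieDerivation.IsKilling.exists_eq_ad D
    have hfx (y : g) : f y = ⁅x, y⁆ := by
      change D y = _
      rw [← hx, LieDerivation.ad_apply_apply]
    by_cases h0 : x = 0
    · obtain ⟨a, ha⟩ := exists_ne (0 : g)
      exact ⟨a, ha, by rw [hfx, h0, zero_lie]⟩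
    · exact ⟨x, h0, by rw [hfx, lie_self]⟩
  refine ⟨fun hbij => ?_, key⟩
  obtain ⟨a, ha, hfa⟩ := key
  exact ha (hbij.injective (by rw [hfa, map_zero]))
end

section
/- Let g be a finite-dimensional simple complex Lie algebra and let D = g[x,x^{−1}] × g[ε] (ε² = 0) be the direct product Lie algebra, equipped with the symmetric bilinear form ((f₁, u₁+εv₁) | (f₂, u₂+εv₂)) = Res_{x=0}(x^{−2}K'(f₁,f₂)) − K(u₁,v₂) − K(v₁,u₂). Let j : g[x] → D be the map j(p) = (p, p₀ + εp₁), where p₀ and p₁ are the coefficients of x⁰ and x¹ in p. Then j is an injective Lie algebra homomorphism, W = {(q, εb) : q ∈ g[x^{−1}], b ∈ g} is a Lie subalgebra of D with (W|W) = 0 which equals its own orthogonal complement, and D = j(g[x]) ⊕ W as a direct sum of ℂ-vector spaces. -/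
/-!
Everything is read off from coordinates: an element of `g[x,x⁻¹]` is uniquely `∑ₙ aₙ xⁿ` with
`aₙ ∈ g`, an element of `g[ε]` is `u + εv`, and `W` is the subspace where `aₙ = 0` for `n > 0` and
`u = 0` (`mem_Wsub_iff`).

* `j` is a homomorphism because `p ↦ p₀ + εp₁` is reduction modulo `x²`; it is injective because
  its first component is.
* `(W|W) = 0` because `i, k ≤ 0` excludes `i + k = 1`, and `ε² = 0`. Conversely, pairing with
  `x^{1-n} y` (`n > 0`) and with `εy` returns `K(aₙ, y)` and `-K(u, y)`, so a vector orthogonal to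
  `W` lies in `W` since `K` is nondegenerate (Cartan's criterion).
* If `j(p) ∈ W` then `pₖ = 0` for `k > 0` by the first component and `p₀ = 0` by the second. The
  sum is everything because `(0, u) = j(u) - (u, 0)`, `(ux, 0) = j(ux) - (0, εu)` and
  `(uxᵏ, 0) = j(uxᵏ)` for `k ≥ 2`.
-/

open scoped TensorProduct

set_option synthInstance.maxHeartbeats 1000000

/-- Binary products of Lie rings (componentwise bracket). -/
instance prodLieRing (L M : Type*) [LieRing L] [LieRing M] : LieRing (L × M) where
  bracket x y := (⁅x.1, y.1⁆, ⁅x.2, y.2⁆)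
  add_lie x y z := Prod.ext (add_lie x.1 y.1 z.1) (add_lie x.2 y.2 z.2)
  lie_add x y z := Prod.ext (lie_add x.1 y.1 z.1) (lie_add x.2 y.2 z.2)
  lie_self x := Prod.ext (lie_self x.1) (lie_self x.2)
  leibniz_lie x y z := Prod.ext (leibniz_lie x.1 y.1 z.1) (leibniz_lie x.2 y.2 z.2)

/-- Binary products of Lie algebras. -/
instance prodLieAlgebra (R L M : Type*) [CommRing R] [LieRing L] [LieRing M]
    [LieAlgebra R L] [LieAlgebra R M] : LieAlgebra R (L × M) where
  lie_smul c x y := Prod.ext (lie_smul c x.1 y.1) (lie_smul c x.2 y.2)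

noncomputable section

variable (g : Type*) [LieRing g] [LieAlgebra ℂ g]

/-- The Lie algebra `D = g[x,x⁻¹] × g[ε]` (`ε² = 0`). -/
abbrev DoubleC : Type _ := (LaurentPolynomial ℂ ⊗[ℂ] g) × (DualNumber ℂ ⊗[ℂ] g)

/-- The subalgebra `W = {(q, εb) : q ∈ g[x⁻¹], b ∈ g}` of `D`. -/
def Wsub : Submodule ℂ (DoubleC g) :=
  Submodule.span ℂ
    ({z | ∃ (u : g) (k : ℤ), k ≤ 0 ∧ z = (LaurentPolynomial.T k ⊗ₜ[ℂ] u, 0)} ∪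
     {z | ∃ b : g, z = (0, (DualNumber.eps : DualNumber ℂ) ⊗ₜ[ℂ] b)})

section helpers

variable {g : Type*} [LieRing g] [LieAlgebra ℂ g]

/-- The coefficient of `xⁿ` of an element of `g[x,x⁻¹]`. -/
def laurentCoeff (n : ℤ) : LaurentPolynomial ℂ ⊗[ℂ] g →ₗ[ℂ] g :=
  (TensorProduct.lid ℂ g).toLinearMap ∘ₗ LinearMap.rTensor g
    (Finsupp.lapply n ∘ₗ
      (AddMonoidAlgebra.coeffLinearEquiv (R := ℂ) (S := ℂ) (M := ℤ)).toLinearMap)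

/-- The component `u` of `u + εv ∈ g[ε]`. -/
def dualFst : DualNumber ℂ ⊗[ℂ] g →ₗ[ℂ] g :=
  (TensorProduct.lid ℂ g).toLinearMap ∘ₗ LinearMap.rTensor g
    (TrivSqZeroExt.fstHom ℂ ℂ ℂ).toLinearMap

/-- The Laurent polynomial `∑ₙ aₙ xⁿ` with coefficients `aₙ ∈ g`. -/
def laurentSum : (ℤ →₀ g) →ₗ[ℂ] LaurentPolynomial ℂ ⊗[ℂ] g :=
  Finsupp.lsum ℂ fun n => TensorProduct.mk ℂ _ _ (LaurentPolynomial.T n)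

/-- The polynomial `∑ₖ aₖ xᵏ` with coefficients `aₖ ∈ g`. -/
def polySum : (ℕ →₀ g) →ₗ[ℂ] Polynomial ℂ ⊗[ℂ] g :=
  Finsupp.lsum ℂ fun n => TensorProduct.mk ℂ _ _ (Polynomial.X ^ n)

@[simp] lemma laurentCoeff_T (n k : ℤ) (u : g) :
    laurentCoeff n (LaurentPolynomial.T k ⊗ₜ[ℂ] u) = if k = n then u else 0 := by
  simp [laurentCoeff, LaurentPolynomial.T_apply]

@[simp] lemma dualFst_tmul (α : DualNumber ℂ) (u : g) :
    dualFst (α ⊗ₜ[ℂ] u) = α.fst • u := by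
  simp [dualFst]

@[simp] lemma laurentSum_single (n : ℤ) (u : g) :
    laurentSum (Finsupp.single n u) = LaurentPolynomial.T n ⊗ₜ[ℂ] u := by
  simp [laurentSum]

@[simp] lemma polySum_single (n : ℕ) (u : g) :
    polySum (Finsupp.single n u) = (Polynomial.X ^ n : Polynomial ℂ) ⊗ₜ[ℂ] u := by
  simp [polySum]

@[simp] lemma laurentCoeff_laurentSum (n : ℤ) (a : ℤ →₀ g) :
    laurentCoeff n (laurentSum a) = a n := by
  induction a using Finsupp.induction_linear with
  | zero => simp
  | add a b ha hb => simp [ha, hb]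
  | single k u => simp [Finsupp.single_apply]

lemma laurentSum_surjective : Function.Surjective (laurentSum (g := g)) := by
  intro f
  rw [← LinearMap.mem_range]
  induction f using TensorProduct.induction_on with
  | zero => exact zero_mem _
  | add x y hx hy => exact add_mem hx hy
  | tmul p u =>
    induction p using LaurentPolynomial.induction_on' with
    | add p q hp hq => rw [TensorProduct.add_tmul]; exact add_mem hp hq
    | C_mul_T n c =>
      rw [← LaurentPolynomial.smul_eq_C_mul, ← TensorProduct.smul_tmul']
      exact Submodule.smul_mem _ _ ⟨Finsupp.single n u, laurentSum_single n u⟩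

lemma polySum_surjective : Function.Surjective (polySum (g := g)) := by
  intro f
  rw [← LinearMap.mem_range]
  induction f using TensorProduct.induction_on with
  | zero => exact zero_mem _
  | add x y hx hy => exact add_mem hx hy
  | tmul p u =>
    induction p using Polynomial.induction_on' with
    | add p q hp hq => rw [TensorProduct.add_tmul]; exact add_mem hp hq
    | monomial n c =>
      rw [← Polynomial.C_mul_X_pow_eq_monomial, ← Polynomial.smul_eq_C_mul,
        ← TensorProduct.smul_tmul']
      exact Submodule.smul_mem _ _ ⟨Finsupp.single n u, polySum_single n u⟩

lemma exists_dual (h : DualNumber ℂ ⊗[ℂ] g) :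
    ∃ u v : g, h = (1 : DualNumber ℂ) ⊗ₜ[ℂ] u + (DualNumber.eps : DualNumber ℂ) ⊗ₜ[ℂ] v := by
  induction h using TensorProduct.induction_on with
  | zero => exact ⟨0, 0, by simp⟩
  | add x y hx hy =>
    obtain ⟨u, v, rfl⟩ := hx
    obtain ⟨u', v', rfl⟩ := hy
    exact ⟨u + u', v + v', by simp only [TensorProduct.tmul_add]; abel⟩
  | tmul α u =>
    refine ⟨α.fst • u, α.snd • u, ?_⟩
    rw [← TensorProduct.smul_tmul, ← TensorProduct.smul_tmul, ← TensorProduct.add_tmul]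
    congr 1
    ext <;> simp

lemma T_mem_Wsub {k : ℤ} (hk : k ≤ 0) (u : g) :
    ((LaurentPolynomial.T k ⊗ₜ[ℂ] u, 0) : DoubleC g) ∈ Wsub g :=
  Submodule.subset_span (Or.inl ⟨u, k, hk, rfl⟩)

lemma eps_mem_Wsub (b : g) :
    ((0, (DualNumber.eps : DualNumber ℂ) ⊗ₜ[ℂ] b) : DoubleC g) ∈ Wsub g :=
  Submodule.subset_span (Or.inr ⟨b, rfl⟩)

/-- `W` is cut out by the vanishing of the coefficients of the positive powers of `x` and of the
`ε`-free component. -/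
lemma mem_Wsub_iff (z : DoubleC g) :
    z ∈ Wsub g ↔ (∀ n : ℤ, 0 < n → laurentCoeff n z.1 = 0) ∧ dualFst z.2 = 0 := by
  constructor
  · intro hz
    induction hz using Submodule.span_induction with
    | mem z hz =>
      rcases hz with ⟨u, k, hk, rfl⟩ | ⟨b, rfl⟩
      · refine ⟨fun n hn => ?_, by simp⟩
        have : k ≠ n := by omega
        simp [this]
      · simp
    | zero => simp
    | add x y _ _ hx hy =>
      exact ⟨fun n hn => by simp [hx.1 n hn, hy.1 n hn], by simp [hx.2, hy.2]⟩
    | smul c x _ hx => exact ⟨fun n hn => by simp [hx.1 n hn], by simp [hx.2]⟩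
  · obtain ⟨f, h⟩ := z
    rintro ⟨h1, h2⟩
    obtain ⟨a, rfl⟩ := laurentSum_surjective f
    obtain ⟨u, v, rfl⟩ := exists_dual h
    simp only [laurentCoeff_laurentSum] at h1
    obtain rfl : u = 0 := by simpa using h2
    have hsum : ((laurentSum a, 0) : DoubleC g) ∈ Wsub g := by
      have : (laurentSum a, (0 : DualNumber ℂ ⊗[ℂ] g))
          = LinearMap.inl ℂ _ _ (laurentSum a) := rfl
      rw [this, laurentSum, Finsupp.lsum_apply, Finsupp.sum, map_sum]
      refine Submodule.sum_mem _ fun n hn => T_mem_Wsub ?_ _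
      by_contra! hpos
      exact (Finsupp.mem_support_iff.mp hn) (h1 n hpos)
    simpa using add_mem hsum (eps_mem_Wsub v)

lemma lie_def (x y : DoubleC g) : ⁅x, y⁆ = (⁅x.1, y.1⁆, ⁅x.2, y.2⁆) := rfl

section bracket

/-! The brackets on `A ⊗ g` and on the product `D` agree with those in Mathlib's `zero_lie`,
`add_lie`, … only after unfolding instances, which `rw` and `simp` do not do; the bilinearity laws
are therefore restated for these two algebras. -/

variable {A : Type*} [CommRing A] [Algebra ℂ A]

lemma tensor_zero_lie (y : A ⊗[ℂ] g) : ⁅(0 : A ⊗[ℂ] g), y⁆ = 0 := zero_lie y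

lemma tensor_lie_zero (x : A ⊗[ℂ] g) : ⁅x, (0 : A ⊗[ℂ] g)⁆ = 0 := lie_zero x

lemma tensor_add_lie (x y z : A ⊗[ℂ] g) : ⁅x + y, z⁆ = ⁅x, z⁆ + ⁅y, z⁆ := add_lie x y z

lemma tensor_lie_add (x y z : A ⊗[ℂ] g) : ⁅x, y + z⁆ = ⁅x, y⁆ + ⁅x, z⁆ := lie_add x y z

end bracket

lemma double_zero_lie (y : DoubleC g) : ⁅(0 : DoubleC g), y⁆ = 0 :=
  zero_lie (L := DoubleC g) (M := DoubleC g) y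

lemma double_lie_zero (x : DoubleC g) : ⁅x, (0 : DoubleC g)⁆ = 0 := lie_zero x

lemma double_add_lie (x y z : DoubleC g) : ⁅x + y, z⁆ = ⁅x, z⁆ + ⁅y, z⁆ := add_lie x y z

lemma double_lie_add (x y z : DoubleC g) : ⁅x, y + z⁆ = ⁅x, y⁆ + ⁅x, z⁆ := lie_add x y z

lemma double_smul_lie (c : ℂ) (x y : DoubleC g) : ⁅c • x, y⁆ = c • ⁅x, y⁆ := smul_lie c x y

lemma double_lie_smul (c : ℂ) (x y : DoubleC g) : ⁅x, c • y⁆ = c • ⁅x, y⁆ := lie_smul c x y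

lemma lie_mem_Wsub : ∀ w₁ ∈ Wsub g, ∀ w₂ ∈ Wsub g, ⁅w₁, w₂⁆ ∈ Wsub g := by
  intro w₁ h₁ w₂ h₂
  refine Submodule.span_induction₂ (p := fun x y _ _ => ⁅x, y⁆ ∈ Wsub g)
    ?_ ?_ ?_ ?_ ?_ ?_ ?_ h₁ h₂
  · rintro x y (⟨u, i, hi, rfl⟩ | ⟨u, rfl⟩) (⟨v, k, hk, rfl⟩ | ⟨v, rfl⟩)
    · rw [lie_def]
      simp only [LieAlgebra.ExtendScalars.bracket_tmul, ← LaurentPolynomial.T_add,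
        tensor_zero_lie]
      exact T_mem_Wsub (by omega) _
    · rw [lie_def, tensor_lie_zero, tensor_zero_lie]; exact zero_mem _
    · rw [lie_def, tensor_zero_lie, tensor_lie_zero]; exact zero_mem _
    · rw [lie_def, tensor_zero_lie, LieAlgebra.ExtendScalars.bracket_tmul,
        DualNumber.eps_mul_eps, TensorProduct.zero_tmul]
      exact zero_mem _
  · intro y _; rw [double_zero_lie]; exact zero_mem _
  · intro x _; rw [double_lie_zero]; exact zero_mem _
  · intro x y z _ _ _ hx hy; rw [double_add_lie]; exact add_mem hx hy
  · intro x y z _ _ _ hx hy; rw [double_lie_add]; exact add_mem hx hy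
  · intro r x y _ _ hx; rw [double_smul_lie]; exact Submodule.smul_mem _ _ hx
  · intro r x y _ _ hx; rw [double_lie_smul]; exact Submodule.smul_mem _ _ hx

end helpers

/-- Let `g` be a finite-dimensional simple complex Lie algebra and let
`D = g[x,x⁻¹] × g[ε]` carry the symmetric bilinear form
`((f₁,u₁+εv₁) | (f₂,u₂+εv₂)) = Res_{x=0}(x⁻²K'(f₁,f₂)) − K(u₁,v₂) − K(v₁,u₂)`.
Let `j : g[x] → D` be `j(p) = (p, p₀ + εp₁)`.  Then `j` is an injective Lie algebra
homomorphism, `W = {(q,εb) : q ∈ g[x⁻¹], b ∈ g}` is a Lie subalgebra with `(W|W) = 0`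
equal to its own orthogonal complement, and `D = j(g[x]) ⊕ W` as `ℂ`-vector spaces. -/
theorem case_C_manin_triple
    [FiniteDimensional ℂ g] [LieAlgebra.IsSimple ℂ g]
    (j : (Polynomial ℂ ⊗[ℂ] g) →ₗ[ℂ] DoubleC g)
    (hj : ∀ (k : ℕ) (u : g),
      j (((Polynomial.X : Polynomial ℂ) ^ k) ⊗ₜ[ℂ] u)
        = (LaurentPolynomial.T (k : ℤ) ⊗ₜ[ℂ] u,
           (if k = 0 then (1 : DualNumber ℂ) else if k = 1 then DualNumber.eps else 0) ⊗ₜ[ℂ] u))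
    (Φ : DoubleC g →ₗ[ℂ] DoubleC g →ₗ[ℂ] ℂ)
    (hΦ1 : ∀ (i k : ℤ) (u v : g),
      Φ (LaurentPolynomial.T i ⊗ₜ[ℂ] u, 0) (LaurentPolynomial.T k ⊗ₜ[ℂ] v, 0)
        = if i + k = 1 then killingForm ℂ g u v else 0)
    (hΦ2 : ∀ (α β : DualNumber ℂ) (u v : g),
      Φ (0, α ⊗ₜ[ℂ] u) (0, β ⊗ₜ[ℂ] v) = -((α * β).snd * killingForm ℂ g u v))
    (hΦ3 : ∀ (f : LaurentPolynomial ℂ ⊗[ℂ] g) (β : DualNumber ℂ) (v : g),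
      Φ (f, 0) (0, β ⊗ₜ[ℂ] v) = 0 ∧ Φ (0, β ⊗ₜ[ℂ] v) (f, 0) = 0) :
    Function.Injective j ∧
    (∀ p q : Polynomial ℂ ⊗[ℂ] g, j ⁅p, q⁆ = ⁅j p, j q⁆) ∧
    (∀ w₁ ∈ Wsub g, ∀ w₂ ∈ Wsub g, ⁅w₁, w₂⁆ ∈ Wsub g) ∧
    (∀ w₁ ∈ Wsub g, ∀ w₂ ∈ Wsub g, Φ w₁ w₂ = 0) ∧
    ({v : DoubleC g | ∀ w ∈ Wsub g, Φ v w = 0} = (Wsub g : Set (DoubleC g))) ∧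
    (LinearMap.range j ⊓ Wsub g = ⊥) ∧ (LinearMap.range j ⊔ Wsub g = ⊤) := by
  have hjfst : ∀ (a : ℕ →₀ g) (k : ℕ), laurentCoeff (k : ℤ) (j (polySum a)).1 = a k := by
    intro a k
    induction a using Finsupp.induction_linear with
    | zero => simp
    | add a b ha hb => simp [ha, hb]
    | single n u => simp [hj, Finsupp.single_apply]
  have hjsnd : ∀ a : ℕ →₀ g, dualFst (j (polySum a)).2 = a 0 := by
    intro a
    induction a using Finsupp.induction_linear with
    | zero => simp
    | add a b ha hb => simp [ha, hb]
    | single n u =>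
      rw [polySum_single, hj]
      rcases n with _ | _ | n <;> simp
  have hiso : ∀ w₁ ∈ Wsub g, ∀ w₂ ∈ Wsub g, Φ w₁ w₂ = 0 := by
    intro w₁ h₁ w₂ h₂
    refine Submodule.span_induction₂ (p := fun x y _ _ => Φ x y = 0)
      ?_ ?_ ?_ ?_ ?_ ?_ ?_ h₁ h₂
    · rintro x y (⟨u, i, hi, rfl⟩ | ⟨u, rfl⟩) (⟨v, k, hk, rfl⟩ | ⟨v, rfl⟩)
      · rw [hΦ1, if_neg (by omega)]
      · exact (hΦ3 _ _ _).1
      · exact (hΦ3 _ _ _).2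
      · simp [hΦ2]
    · intro y _; simp
    · intro x _; simp
    · intro x y z _ _ _ hx hy; simp [hx, hy]
    · intro x y z _ _ _ hx hy; simp [hx, hy]
    · intro r x y _ _ hx; simp [hx]
    · intro r x y _ _ hx; simp [hx]
  -- Cartan's criterion: the Killing form of a simple Lie algebra is nondegenerate.
  have hK : ∀ u : g, (∀ v, killingForm ℂ g u v = 0) → u = 0 := by
    intro u hu
    have : u ∈ LinearMap.ker (killingForm ℂ g) := LinearMap.ext hu
    simpa using this
  have hsplit : ∀ (f : LaurentPolynomial ℂ ⊗[ℂ] g) (h : DualNumber ℂ ⊗[ℂ] g),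
      ((f, h) : DoubleC g) = (f, 0) + (0, h) := by intro f h; simp
  have hΦ1' : ∀ (a : ℤ →₀ g) (k : ℤ) (v : g),
      Φ (laurentSum a, 0) (LaurentPolynomial.T k ⊗ₜ[ℂ] v, 0) = killingForm ℂ g (a (1 - k)) v := by
    intro a k v
    induction a using Finsupp.induction_linear with
    | zero =>
      rw [map_zero, show ((0, 0) : DoubleC g) = 0 from rfl]
      simp
    | add a b ha hb =>
      rw [map_add, show ((laurentSum a + laurentSum b, 0) : DoubleC g)
        = (laurentSum a, 0) + (laurentSum b, 0) by simp, map_add, LinearMap.add_apply, ha, hb]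
      simp
    | single n u =>
      rw [laurentSum_single, hΦ1, Finsupp.single_apply]
      by_cases h : n + k = 1
      · rw [if_pos h, if_pos (by omega)]
      · rw [if_neg h, if_neg (by omega)]; simp
  have hX : ∀ (n : ℕ) (u : g), ((LaurentPolynomial.T (n : ℤ) ⊗ₜ[ℂ] u,
      (if n = 0 then (1 : DualNumber ℂ) else if n = 1 then DualNumber.eps else 0) ⊗ₜ[ℂ] u) :
      DoubleC g) ∈ LinearMap.range j ⊔ Wsub g :=
    fun n u => Submodule.mem_sup_left ⟨_, hj n u⟩
  refine ⟨?_, ?_, lie_mem_Wsub, hiso, ?_, ?_, ?_⟩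
  · rw [injective_iff_map_eq_zero]
    intro p hp
    obtain ⟨a, rfl⟩ := polySum_surjective p
    have : a = 0 := by
      ext k
      rw [← hjfst, hp]
      simp
    rw [this, map_zero]
  · intro p q
    obtain ⟨a, rfl⟩ := polySum_surjective p
    obtain ⟨b, rfl⟩ := polySum_surjective q
    induction a using Finsupp.induction_linear with
    | zero => rw [map_zero, tensor_zero_lie, map_zero, double_zero_lie]
    | add a a' ha ha' => rw [map_add, tensor_add_lie, map_add, map_add, double_add_lie, ha, ha']
    | single i u =>
      induction b using Finsupp.induction_linear with
      | zero => rw [map_zero, tensor_lie_zero, map_zero, double_lie_zero]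
      | add b b' hb hb' => rw [map_add, tensor_lie_add, map_add, map_add, double_lie_add, hb, hb']
      | single k v =>
        rw [polySum_single, polySum_single, LieAlgebra.ExtendScalars.bracket_tmul, ← pow_add,
          hj, hj, hj, lie_def]
        simp only [LieAlgebra.ExtendScalars.bracket_tmul, ← LaurentPolynomial.T_add]
        refine Prod.ext (by simp) ?_
        dsimp only
        congr 1
        -- The classes of `xⁱ`, `xᵏ` modulo `x²` multiply like `1, ε, 0, 0, …`.
        rcases i with _ | _ | i <;> rcases k with _ | _ | k <;> simp
        grind
  · ext ⟨f, h⟩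
    refine ⟨fun hz => ?_, fun hz w hw => hiso _ hz w hw⟩
    obtain ⟨a, rfl⟩ := laurentSum_surjective f
    obtain ⟨u, v, rfl⟩ := exists_dual h
    simp only [Set.mem_ofPred_eq] at hz
    refine (mem_Wsub_iff _).2 ⟨fun n hn => ?_, ?_⟩
    · rw [laurentCoeff_laurentSum]
      refine hK _ fun y => ?_
      have := hz _ (T_mem_Wsub (k := 1 - n) (by omega) y)
      rw [hsplit, map_add, LinearMap.add_apply, hΦ1',
        show ((0, (1 : DualNumber ℂ) ⊗ₜ[ℂ] u + DualNumber.eps ⊗ₜ[ℂ] v) : DoubleC g)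
          = (0, (1 : DualNumber ℂ) ⊗ₜ[ℂ] u) + (0, DualNumber.eps ⊗ₜ[ℂ] v) by simp,
        map_add, LinearMap.add_apply, (hΦ3 _ _ _).2, (hΦ3 _ _ _).2] at this
      simpa using this
    · suffices u = 0 by simp [this]
      refine hK _ fun y => ?_
      have := hz _ (eps_mem_Wsub y)
      rw [hsplit, map_add, LinearMap.add_apply, (hΦ3 _ _ _).1,
        show ((0, (1 : DualNumber ℂ) ⊗ₜ[ℂ] u + DualNumber.eps ⊗ₜ[ℂ] v) : DoubleC g)
          = (0, (1 : DualNumber ℂ) ⊗ₜ[ℂ] u) + (0, DualNumber.eps ⊗ₜ[ℂ] v) by simp,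
        map_add, LinearMap.add_apply, hΦ2, hΦ2] at this
      simpa using this
  · rw [eq_bot_iff]
    rintro _ ⟨⟨p, rfl⟩, hW⟩
    obtain ⟨a, rfl⟩ := polySum_surjective p
    obtain ⟨h1, h2⟩ := (mem_Wsub_iff _).1 hW
    have : a = 0 := by
      ext k
      rcases Nat.eq_zero_or_pos k with rfl | hk
      · rw [← hjsnd, h2]; rfl
      · rw [← hjfst, h1 _ (by exact_mod_cast hk)]; rfl
    simp [this]
  · have heps : ∀ u : g, ((0, (DualNumber.eps : DualNumber ℂ) ⊗ₜ[ℂ] u) : DoubleC g)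
        ∈ LinearMap.range j ⊔ Wsub g := fun u => Submodule.mem_sup_right (eps_mem_Wsub u)
    have hone : ∀ u : g, ((0, (1 : DualNumber ℂ) ⊗ₜ[ℂ] u) : DoubleC g)
        ∈ LinearMap.range j ⊔ Wsub g := by
      intro u
      -- `(0, u) = j(u) - (u, 0)`
      simpa using sub_mem (hX 0 u) (Submodule.mem_sup_right (T_mem_Wsub le_rfl u))
    have hT : ∀ (n : ℤ) (u : g), ((LaurentPolynomial.T n ⊗ₜ[ℂ] u, 0) : DoubleC g)
        ∈ LinearMap.range j ⊔ Wsub g := by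
      intro n u
      rcases le_or_gt n 0 with hn | hn
      · exact Submodule.mem_sup_right (T_mem_Wsub hn u)
      · obtain ⟨k, rfl⟩ : ∃ k : ℕ, n = ((k + 1 : ℕ) : ℤ) := ⟨(n - 1).toNat, by omega⟩
        rcases k with _ | k
        -- `(ux, 0) = j(ux) - (0, εu)`
        · simpa using sub_mem (hX 1 u) (heps u)
        · simpa [add_assoc, one_add_one_eq_two] using hX (k + 2) u
    rw [eq_top_iff]
    rintro ⟨f, h⟩ -
    obtain ⟨a, rfl⟩ := laurentSum_surjective f
    obtain ⟨u, v, rfl⟩ := exists_dual h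
    rw [hsplit]
    refine add_mem ?_ ?_
    · induction a using Finsupp.induction_linear with
      | zero => rw [map_zero]; exact zero_mem _
      | add a b ha hb => simpa using add_mem ha hb
      | single n u => rw [laurentSum_single]; exact hT n u
    · simpa using add_mem (hone u) (heps v)

end
end
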